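/- arXiv:1712.09515 — 2 statements merged into one kernel-verified Lean document; each statement's English description precedes it below -/
import Mathlib

section
/- Fix 0 < T < ∞, α ∈ (1,2] and δ ∈ [0, (α−1)/2). Fix γ ∈ ((1+α+2δ)/(2α), 1) and η ∈ (0, γ − (1+α+2δ)/(2α)). Then there exists a constant C > 0 such that for all 0 < s ≤ t ≤ T and every v with |v|_{H^{−α/2}_2} < ∞, one has |(e^{−A^{α/2} t} − e^{−A^{α/2} s}) v|_{C^δ} ≤ C · s^{−γ} · (t−s)^{η} · |v|_{H^{−α/2}_2}. -/
/-!
The semigroup is a Fourier multiplier, so everything reduces to a bound on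
`e^{-at} - e^{-as}` with `a = μ ^ α`, `μ = (k + 1) π`. Writing it as
`e^{-as} (e^{-a(t-s)} - 1)` and using `e^{-z} ≤ z ^ (-γ)` and `1 - e^{-w} ≤ w ^ η`
(`abs_exp_sub_exp_le`) gives the factor `s ^ (-γ) (t - s) ^ η` times `μ ^ (α (η - γ))`.
On the eigenfunctions, the sup norm is bounded and the `δ`-Hölder seminorm costs `μ ^ δ`
(`abs_sineEig_sub_le`). Splitting off the weight `μ ^ (-α/2)` and applying Cauchy-Schwarz
(`weighted_coeff_sum`), it remains that `Σ μ ^ (2 α (η - γ) + α + 2 δ)` converges, i.e. that the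
exponent is below `-1`; this is exactly the condition `η < γ - (1 + α + 2 δ) / (2 α)`.
-/

open Real MeasureTheory Set

noncomputable section

/-- `sineEig k` is the eigenfunction `e_{k+1}(x) = √2 sin((k+1)πx)` (0-based indexing). -/
def sineEig (k : ℕ) (x : ℝ) : ℝ := Real.sqrt 2 * Real.sin (((k : ℝ) + 1) * Real.pi * x)

/-- Fourier sine coefficient `⟨v, e_{k+1}⟩ = ∫₀¹ v(x) e_{k+1}(x) dx`. -/
def fco (v : ℝ → ℝ) (k : ℕ) : ℝ := ∫ x in (0:ℝ)..1, v x * sineEig k x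

/-- Fractional Dirichlet heat semigroup `e^{-A^{α/2} t} v`. -/
def heatSG (α t : ℝ) (v : ℝ → ℝ) (x : ℝ) : ℝ :=
  ∑' k : ℕ, Real.exp (-(((k : ℝ) + 1) * Real.pi) ^ α * t) * fco v k * sineEig k x

/-- Spectral Sobolev `H^β₂(0,1)` norm. -/
def hNorm (β : ℝ) (v : ℝ → ℝ) : ℝ :=
  Real.sqrt (∑' k : ℕ, (((k : ℝ) + 1) * Real.pi) ^ (2 * β) * fco v k ^ 2)

/-- Membership in `H^β₂(0,1)` (finiteness of the spectral norm). -/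
def memH (β : ℝ) (v : ℝ → ℝ) : Prop :=
  Summable fun k : ℕ => (((k : ℝ) + 1) * Real.pi) ^ (2 * β) * fco v k ^ 2

/-- Supremum norm on `[0,1]`. -/
def supIcc (v : ℝ → ℝ) : ℝ := ⨆ x : Icc (0:ℝ) 1, |v (x : ℝ)|

/-- Hölder seminorm of exponent `δ` on `[0,1]`. -/
def holderSemi (δ : ℝ) (v : ℝ → ℝ) : ℝ :=
  ⨆ p : Icc (0:ℝ) 1 × Icc (0:ℝ) 1,
    |v (p.1 : ℝ) - v (p.2 : ℝ)| / |(p.1 : ℝ) - (p.2 : ℝ)| ^ δ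

/-- The `C^δ(0,1)` norm: sup norm plus Hölder seminorm (just the sup norm when `δ = 0`). -/
def cNorm (δ : ℝ) (v : ℝ → ℝ) : ℝ :=
  if δ = 0 then supIcc v else supIcc v + holderSemi δ v

/-- Membership in `C^δ(0,1)`: continuity plus finite Hölder seminorm. -/
def memC (δ : ℝ) (u : ℝ → ℝ) : Prop :=
  ContinuousOn u (Icc 0 1) ∧
    BddAbove (Set.range fun p : Icc (0:ℝ) 1 × Icc (0:ℝ) 1 =>
      |u (p.1 : ℝ) - u (p.2 : ℝ)| / |(p.1 : ℝ) - (p.2 : ℝ)| ^ δ)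

/-- `L^p(0,1)` norm. -/
def lpNorm (p : ℝ) (v : ℝ → ℝ) : ℝ := (∫ x in (0:ℝ)..1, |v x| ^ p) ^ (1 / p)

/-- Galerkin projection `P_N v` onto the first `N` modes. -/
def galerkin (N : ℕ) (v : ℝ → ℝ) (x : ℝ) : ℝ :=
  ∑ k ∈ Finset.range N, fco v k * sineEig k x

/-- Spectral `H^β₂` norm of `(1 - P_N) v`. -/
def tailHNorm (β : ℝ) (N : ℕ) (v : ℝ → ℝ) : ℝ :=
  Real.sqrt (∑' k : ℕ,
    if k < N then 0 else (((k : ℝ) + 1) * Real.pi) ^ (2 * β) * fco v k ^ 2)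

/-- `(1 - P_N) e^{-A^{α/2} t} v`. -/
def tailSG (α t : ℝ) (N : ℕ) (v : ℝ → ℝ) (x : ℝ) : ℝ :=
  ∑' k : ℕ, if k < N then 0
    else Real.exp (-(((k : ℝ) + 1) * Real.pi) ^ α * t) * fco v k * sineEig k x

/-- Cosine coefficient `∫₀¹ g(x) √2 cos((k+1)πx) dx`. -/
def cco (g : ℝ → ℝ) (k : ℕ) : ℝ :=
  ∫ x in (0:ℝ)..1, g x * (Real.sqrt 2 * Real.cos (((k : ℝ) + 1) * Real.pi * x))

/-- Spectral `H^{-α/2}₂` norm of the distributional derivative `∂ₓ g`. -/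
def dxHNorm (α : ℝ) (g : ℝ → ℝ) : ℝ :=
  Real.sqrt (∑' k : ℕ, (((k : ℝ) + 1) * Real.pi) ^ (2 - α) * cco g k ^ 2)


/-- `z ^ γ * exp (-z) ≤ 1`, in the form of a polynomial bound on the exponential. -/
lemma exp_neg_le_rpow_neg {z γ : ℝ} (hz : 0 < z) (h0 : 0 ≤ γ) (h1 : γ ≤ 1) :
    Real.exp (-z) ≤ z ^ (-γ) := by
  rw [Real.rpow_neg hz.le, Real.exp_neg]
  apply inv_anti₀ (Real.rpow_pos_of_pos hz γ)
  rcases le_total z 1 with h | h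
  · exact (Real.rpow_le_one hz.le h h0).trans (Real.one_le_exp hz.le)
  · calc z ^ γ ≤ z ^ (1 : ℝ) := Real.rpow_le_rpow_of_exponent_le h h1
      _ = z := Real.rpow_one z
      _ ≤ Real.exp z := by linarith [Real.add_one_le_exp z]

/-- Interpolation between the bounds `1` and `w`. -/
lemma min_le_rpow {w η B : ℝ} (hw : 0 ≤ w) (h0 : 0 < η) (h1 : η ≤ 1)
    (hB1 : B ≤ 1) (hBw : B ≤ w) : B ≤ w ^ η := by
  rcases le_total w 1 with h | h
  · rcases hw.eq_or_lt with rfl | hw'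
    · rwa [Real.zero_rpow h0.ne']
    · calc B ≤ w ^ (1 : ℝ) := by rwa [Real.rpow_one]
        _ ≤ w ^ η := Real.rpow_le_rpow_of_exponent_ge hw' h h1
  · exact hB1.trans (Real.one_le_rpow h h0.le)

/-- Smoothing costs `s ^ (-γ)`, the time increment gains `(t - s) ^ η`, and the multiplier
decays like `a ^ (η - γ)` in the eigenvalue `a`. -/
lemma abs_exp_sub_exp_le {a s t γ η : ℝ} (ha : 0 < a) (hs : 0 < s) (hst : s ≤ t)
    (hγ0 : 0 ≤ γ) (hγ1 : γ ≤ 1) (hη0 : 0 < η) (hη1 : η ≤ 1) :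
    |Real.exp (-a * t) - Real.exp (-a * s)| ≤ s ^ (-γ) * (t - s) ^ η * a ^ (η - γ) := by
  have hts : 0 ≤ t - s := sub_nonneg.2 hst
  have e1 : Real.exp (-a * t) = Real.exp (-(a * s)) * Real.exp (-(a * (t - s))) := by
    rw [← Real.exp_add]; congr 1; ring
  have e2 : Real.exp (-a * s) = Real.exp (-(a * s)) := by congr 1; ring
  have hw : 0 ≤ a * (t - s) := mul_nonneg ha.le hts
  have h1 : 1 - Real.exp (-(a * (t - s))) ≤ (a * (t - s)) ^ η := by
    apply min_le_rpow hw hη0 hη1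
    · linarith [Real.exp_pos (-(a * (t - s)))]
    · linarith [Real.add_one_le_exp (-(a * (t - s)))]
  have h0 : 0 ≤ 1 - Real.exp (-(a * (t - s))) := by
    have := Real.exp_le_one_iff.2 (neg_nonpos.2 hw)
    linarith
  calc |Real.exp (-a * t) - Real.exp (-a * s)|
      = Real.exp (-(a * s)) * (1 - Real.exp (-(a * (t - s)))) := by
        rw [e1, e2, abs_sub_comm, ← mul_one_sub, abs_of_nonneg]
        exact mul_nonneg (Real.exp_pos _).le h0
    _ ≤ (a * s) ^ (-γ) * (a * (t - s)) ^ η := by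
        gcongr
        exact exp_neg_le_rpow_neg (mul_pos ha hs) hγ0 hγ1
    _ = s ^ (-γ) * (t - s) ^ η * a ^ (η - γ) := by
        rw [Real.mul_rpow ha.le hs.le, Real.mul_rpow ha.le hts, sub_eq_add_neg η γ,
          Real.rpow_add ha]
        ring

/-- The frequency `(k + 1) π` of `sineEig k`. -/
def freq (k : ℕ) : ℝ := ((k : ℝ) + 1) * Real.pi

lemma one_le_freq (k : ℕ) : 1 ≤ freq k := by
  have h1 : (1 : ℝ) ≤ (k : ℝ) + 1 := by linarith [Nat.cast_nonneg (α := ℝ) k]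
  have h2 : (1 : ℝ) ≤ Real.pi := by linarith [Real.pi_gt_three]
  exact one_le_mul_of_one_le_of_one_le h1 h2

lemma freq_pos (k : ℕ) : 0 < freq k := one_pos.trans_le (one_le_freq k)

lemma abs_sineEig_le (k : ℕ) (x : ℝ) : |sineEig k x| ≤ 2 := by
  have h2 : Real.sqrt 2 ≤ 2 := Real.sqrt_le_iff.2 (by norm_num)
  unfold sineEig
  rw [abs_mul, abs_of_nonneg (Real.sqrt_nonneg 2)]
  nlinarith [Real.abs_sin_le_one (((k : ℝ) + 1) * Real.pi * x), Real.sqrt_nonneg 2,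
    abs_nonneg (Real.sin (((k : ℝ) + 1) * Real.pi * x))]

lemma abs_sineEig_sub_le {δ : ℝ} (h0 : 0 < δ) (h1 : δ ≤ 1) (k : ℕ) (x y : ℝ) :
    |sineEig k x - sineEig k y| ≤ 4 * (freq k ^ δ * |x - y| ^ δ) := by
  have h2 : Real.sqrt 2 ≤ 2 := Real.sqrt_le_iff.2 (by norm_num)
  have hl : |Real.sin (freq k * x) - Real.sin (freq k * y)| ≤ freq k * |x - y| := by
    have := Real.lipschitzWith_sin.dist_le_mul (freq k * x) (freq k * y)
    rwa [Real.dist_eq, Real.dist_eq, NNReal.coe_one, one_mul, ← mul_sub, abs_mul,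
      abs_of_pos (freq_pos k)] at this
  have hb : |Real.sin (freq k * x) - Real.sin (freq k * y)| ≤ 2 :=
    (abs_sub _ _).trans (by
      linarith [Real.abs_sin_le_one (freq k * x), Real.abs_sin_le_one (freq k * y)])
  have hw : 0 ≤ freq k * |x - y| := mul_nonneg (freq_pos k).le (abs_nonneg _)
  have key : |Real.sin (freq k * x) - Real.sin (freq k * y)| / 2 ≤ (freq k * |x - y|) ^ δ :=
    min_le_rpow hw h0 h1 (by linarith) (by linarith)
  rw [Real.mul_rpow (freq_pos k).le (abs_nonneg _)] at key
  have : sineEig k x - sineEig k y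
      = Real.sqrt 2 * (Real.sin (freq k * x) - Real.sin (freq k * y)) := by
    unfold sineEig freq; ring
  rw [this, abs_mul, abs_of_nonneg (Real.sqrt_nonneg 2)]
  nlinarith [Real.sqrt_nonneg 2, abs_nonneg (Real.sin (freq k * x) - Real.sin (freq k * y))]

/-- `Σ (kπ)^(2p)` converges for `2p < -1`. -/
lemma summable_freq_rpow_sq {p : ℝ} (hp : 2 * p < -1) :
    Summable fun k : ℕ => (freq k ^ p) ^ (2 : ℝ) := by
  have h1 : Summable fun k : ℕ => ((k + 1 : ℕ) : ℝ) ^ (2 * p) :=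
    (summable_nat_add_iff 1).2 (Real.summable_nat_rpow.2 hp)
  refine (h1.mul_right (Real.pi ^ (2 * p))).congr fun k => ?_
  rw [← Real.rpow_mul (freq_pos k).le, mul_comm p 2, freq,
    Real.mul_rpow (by positivity) Real.pi_pos.le]
  push_cast
  rfl

/-- Cauchy-Schwarz between a summable power of the frequencies and the spectral
`H^{-α/2}₂` norm. -/
lemma weighted_coeff_sum {α p : ℝ} (hp : 2 * p < -1) {v : ℝ → ℝ} (hv : memH (-(α / 2)) v) :
    (Summable fun k => freq k ^ p * (freq k ^ (-(α / 2)) * |fco v k|)) ∧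
    ∑' k, freq k ^ p * (freq k ^ (-(α / 2)) * |fco v k|)
      ≤ Real.sqrt (∑' k, (freq k ^ p) ^ (2 : ℝ)) * hNorm (-(α / 2)) v := by
  have e : ∀ k, (freq k ^ (-(α / 2)) * |fco v k|) ^ (2 : ℝ)
      = (((k : ℝ) + 1) * Real.pi) ^ (2 * -(α / 2)) * fco v k ^ 2 := fun k => by
    rw [Real.mul_rpow (Real.rpow_nonneg (freq_pos k).le _) (abs_nonneg _),
      ← Real.rpow_mul (freq_pos k).le, Real.rpow_two, sq_abs, mul_comm (-(α / 2)) 2]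
    rfl
  have hv' : Summable fun k => (freq k ^ (-(α / 2)) * |fco v k|) ^ (2 : ℝ) :=
    Summable.congr hv fun k => (e k).symm
  have h := Real.summable_and_inner_le_Lp_mul_Lq_tsum_of_nonneg
    (Real.HolderConjugate.two_two)
    (fun k => Real.rpow_nonneg (freq_pos k).le p)
    (fun k => mul_nonneg (Real.rpow_nonneg (freq_pos k).le (-(α / 2))) (abs_nonneg (fco v k)))
    (summable_freq_rpow_sq hp) hv'
  refine ⟨h.1, h.2.trans_eq ?_⟩
  rw [← Real.sqrt_eq_rpow, ← Real.sqrt_eq_rpow, hNorm]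
  simp_rw [e]

/-- The sine series defining the semigroup converges absolutely at positive times. -/
lemma summable_heatSG {α γ t : ℝ} (ht : 0 < t) (h0 : 0 ≤ γ) (h1 : γ ≤ 1)
    (hγ : 1 + α < 2 * α * γ) {v : ℝ → ℝ} (hv : memH (-(α / 2)) v) (x : ℝ) :
    Summable fun k : ℕ =>
      Real.exp (-(((k : ℝ) + 1) * Real.pi) ^ α * t) * fco v k * sineEig k x := by
  have hp : 2 * (α / 2 - α * γ) < -1 := by linarith
  refine Summable.of_norm_bounded
    ((weighted_coeff_sum hp hv).1.mul_left (2 * t ^ (-γ))) fun k => ?_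
  have hf := freq_pos k
  have ha : 0 < freq k ^ α := Real.rpow_pos_of_pos hf α
  have hE : Real.exp (-(((k : ℝ) + 1) * Real.pi) ^ α * t) ≤ t ^ (-γ) * freq k ^ (-(α * γ)) := by
    rw [neg_mul]
    refine (exp_neg_le_rpow_neg (mul_pos ha ht) h0 h1).trans_eq ?_
    rw [Real.mul_rpow ha.le ht.le, ← Real.rpow_mul hf.le, mul_comm, mul_neg]
  have ee : freq k ^ (α / 2 - α * γ) * (freq k ^ (-(α / 2)) * |fco v k|)
      = freq k ^ (-(α * γ)) * |fco v k| := by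
    rw [← mul_assoc, ← Real.rpow_add hf]; congr 2; ring
  rw [ee, Real.norm_eq_abs, abs_mul, abs_mul, abs_of_pos (Real.exp_pos _)]
  calc _ ≤ t ^ (-γ) * freq k ^ (-(α * γ)) * |fco v k| * 2 := by
        gcongr
        exact abs_sineEig_le k x
    _ = _ := by ring

/-- time-Hölder estimate for the semigroup in `L(H^{-α/2}₂, C^δ)`. -/
theorem stmt6 (T α δ γ η : ℝ) (hT : 0 < T) (hα : α ∈ Set.Ioc (1:ℝ) 2)
    (hδ : δ ∈ Set.Ico (0:ℝ) ((α - 1)/2))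
    (hγ : γ ∈ Set.Ioo ((1 + α + 2*δ)/(2*α)) 1)
    (hη : η ∈ Set.Ioo (0:ℝ) (γ - (1 + α + 2*δ)/(2*α))) :
    ∃ C > 0, ∀ s t : ℝ, 0 < s → s ≤ t → t ≤ T → ∀ v : ℝ → ℝ, memH (-(α/2)) v →
      cNorm δ (fun x => heatSG α t v x - heatSG α s v x)
        ≤ C * s ^ (-γ) * (t - s) ^ η * hNorm (-(α/2)) v := by
  obtain ⟨hα1, hα2⟩ := hα
  obtain ⟨hδ0, hδ1⟩ := hδ
  obtain ⟨hγ1, hγ2⟩ := hγ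
  obtain ⟨hη0, hη1⟩ := hη
  have hα0 : 0 < α := by linarith
  have hq : 0 < (1 + α + 2 * δ) / (2 * α) := by positivity
  have hγ0 : 0 < γ := hq.trans hγ1
  have hη' : η ≤ 1 := by linarith
  have hδ' : δ ≤ 1 := by linarith
  have hgap : 1 + α + 2 * δ < 2 * α * (γ - η) := by
    have : (1 + α + 2 * δ) / (2 * α) < γ - η := by linarith
    rw [div_lt_iff₀ (by positivity)] at this
    linarith
  have hγα : 1 + α < 2 * α * γ := by nlinarith [mul_pos hα0 hη0]
  -- After Cauchy-Schwarz the frequencies carry the exponent `2 * p`, including the `δ`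
  -- derivatives that the Hölder seminorm costs.
  set p : ℝ := α * (η - γ) + α / 2 + δ with hp_def
  have hp : 2 * p < -1 := by rw [hp_def]; linarith
  set S : ℝ := Real.sqrt (∑' k, (freq k ^ p) ^ (2 : ℝ)) with hS
  have hS0 : 0 ≤ S := Real.sqrt_nonneg _
  refine ⟨6 * S + 1, by linarith, fun s t hs hst _ v hv => ?_⟩
  obtain ⟨hsum, hle⟩ := weighted_coeff_sum hp hv
  rw [← hS] at hle
  set H := hNorm (-(α / 2)) v with hH
  have hH0 : 0 ≤ H := Real.sqrt_nonneg _
  set R : ℝ := s ^ (-γ) * (t - s) ^ η with hR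
  have hR0 : 0 ≤ R := mul_nonneg (Real.rpow_nonneg hs.le _)
    (Real.rpow_nonneg (sub_nonneg.2 hst) _)
  let m : ℕ → ℝ := fun k =>
    (Real.exp (-(((k : ℝ) + 1) * Real.pi) ^ α * t)
      - Real.exp (-(((k : ℝ) + 1) * Real.pi) ^ α * s)) * fco v k
  have hm : ∀ k, freq k ^ δ * |m k|
      ≤ R * (freq k ^ p * (freq k ^ (-(α / 2)) * |fco v k|)) := fun k => by
    have hf := freq_pos k
    have h := abs_exp_sub_exp_le (Real.rpow_pos_of_pos hf α) hs hst hγ0.le hγ2.le hη0 hη'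
    rw [← Real.rpow_mul hf.le] at h
    have ee : freq k ^ p * (freq k ^ (-(α / 2)) * |fco v k|)
        = freq k ^ δ * (freq k ^ (α * (η - γ)) * |fco v k|) := by
      rw [← mul_assoc, ← mul_assoc, ← Real.rpow_add hf, ← Real.rpow_add hf]
      congr 2; rw [hp_def]; ring
    rw [ee, abs_mul]
    calc _ ≤ freq k ^ δ * (R * freq k ^ (α * (η - γ)) * |fco v k|) := by
          gcongr
          exact h
      _ = _ := by ring
  have hu : ∀ x, HasSum (fun k => m k * sineEig k x) (heatSG α t v x - heatSG α s v x) :=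
    fun x => by
      have h := (summable_heatSG (hs.trans_le hst) hγ0.le hγ2.le hγα hv x).hasSum.sub
        (summable_heatSG hs hγ0.le hγ2.le hγα hv x).hasSum
      refine (funext fun k => ?_ : _ = fun k => m k * sineEig k x) ▸ h
      simp only [m]
      ring
  have hbound : ∀ (c : ℝ) (f : ℕ → ℝ) (a : ℝ), 0 ≤ c → HasSum (fun k => m k * f k) a →
      (∀ k, |f k| ≤ c * freq k ^ δ) → |a| ≤ c * (R * (S * H)) := by
    intro c f a hc ha hf
    have h1 : ∀ k, ‖m k * f k‖
        ≤ c * R * (freq k ^ p * (freq k ^ (-(α / 2)) * |fco v k|)) := fun k => by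
      rw [Real.norm_eq_abs, abs_mul]
      calc |m k| * |f k| ≤ |m k| * (c * freq k ^ δ) := by gcongr; exact hf k
        _ = c * (freq k ^ δ * |m k|) := by ring
        _ ≤ c * (R * (freq k ^ p * (freq k ^ (-(α / 2)) * |fco v k|))) := by
          exact mul_le_mul_of_nonneg_left (hm k) hc
        _ = _ := by ring
    have h2 := tsum_of_norm_bounded (hsum.hasSum.mul_left (c * R)) h1
    rw [ha.tsum_eq, Real.norm_eq_abs] at h2
    calc |a| ≤ _ := h2
      _ ≤ c * R * (S * H) := by gcongr
      _ = _ := by ring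
  have hRSH : 0 ≤ R * (S * H) := by positivity
  have hRH : 0 ≤ R * H := by positivity
  have hsup : supIcc (fun x => heatSG α t v x - heatSG α s v x) ≤ 2 * (R * (S * H)) := by
    refine Real.iSup_le (fun x => ?_) (by positivity)
    refine hbound 2 _ _ (by norm_num) (hu x) fun k => ?_
    have := Real.one_le_rpow (one_le_freq k) hδ0
    linarith [abs_sineEig_le k x]
  have hfin : (6 * S + 1) * s ^ (-γ) * (t - s) ^ η * H = 6 * (R * (S * H)) + R * H := by
    rw [hR]; ring
  rw [hfin]
  unfold cNorm
  split_ifs with h0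
  · linarith
  have hδpos : 0 < δ := lt_of_le_of_ne hδ0 (Ne.symm h0)
  have hsemi : holderSemi δ (fun x => heatSG α t v x - heatSG α s v x)
      ≤ 4 * (R * (S * H)) := by
    refine Real.iSup_le (fun q => ?_) (by positivity)
    obtain ⟨⟨x, hx⟩, ⟨y, hy⟩⟩ := q
    have hd : 0 ≤ |x - y| ^ δ := Real.rpow_nonneg (abs_nonneg _) _
    -- `div_le_of_le_mul₀` covers the diagonal, where the quotient is `0 / 0 = 0`.
    refine div_le_of_le_mul₀ hd (by positivity) ?_
    have h := hbound (4 * |x - y| ^ δ) (fun k => sineEig k x - sineEig k y) _ (by positivity)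
      (by simpa only [mul_sub] using (hu x).sub (hu y)) fun k => by
        refine (abs_sineEig_sub_le hδpos hδ' k x y).trans_eq ?_
        ring
    refine h.trans_eq ?_
    ring
  linarith
end
end

section
/- Let α ∈ (1,2], δ ∈ (1 − α/2, 1), and let f: ℝ → ℝ be a polynomial. Then for every R > 0 there exists a constant C_R > 0 such that for every u ∈ C^δ(0,1) with |u|_{C^δ} ≤ R, one has |F(u)|_{H^{−α/2}_2} ≤ C_R · (1 + |u|_{C^δ}); equivalently, (Σ_{k≥1} (kπ)^{2−α} (∫₀¹ f(u(x)) √2·cos(kπx) dx)²)^{1/2} ≤ C_R · (1 + |u|_{C^δ}). -/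
/-!
Write `g = f ∘ u`. On the ball `|u|_{C^δ} ≤ R` the values of `u` lie in `[-R, R]`, where the
polynomial `f` is Lipschitz, so `g` is `δ`-Hölder with a constant depending only on `R` and `f`.
It then suffices to bound `dxHNorm α g` by a constant (`dxHNorm_le_of_holder`); a bound by a
constant is stronger than linear growth because the norm of `u` is nonnegative.

That bound is Bernstein's argument. The function `G x = g ‖x‖` on the circle `AddCircle 2` is the
even periodic extension of `g`; it is `δ`-Hölder and its Fourier coefficients are the cosine
coefficients `c_n` of `g` (`fourierCoeff_even_ext`). The increment `G (· + h) - G` has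
coefficients `(e^{iπnh} - 1) c_n` and is bounded by `L h^δ`, so Bessel's inequality with
`h = 2^{-(m+1)}` gives `∑ c_n² ≤ L² 2^{-2δ(m+1)} / 2` over `2^m ≤ n < 2^(m+1)`
(`sum_dyadic_block_le`). The weight `(nπ)^(2-α)` costs a factor `(2^(m+1) π)^(2-α)` on that block,
and the resulting series is geometric of ratio `2^(2-α-2δ) < 1` because `δ > 1 - α/2`.
-/

open Real MeasureTheory Set

noncomputable section

/-! ### Fourier coefficients on the circle of length two -/

instance factTwoPos : Fact ((0:ℝ) < 2) := ⟨two_pos⟩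

/-- The Fourier coefficients of the even `2`-periodic extension `x ↦ g ‖x‖` of a function `g` on
`[0,1]` are its cosine coefficients: on `AddCircle 2`, `‖x‖` is the distance of `x` to `2ℤ`. -/
theorem fourierCoeff_even_ext (g : ℝ → ℝ) (hg : ContinuousOn g (Icc 0 1)) (n : ℤ) :
    fourierCoeff (T := 2) (fun x : AddCircle (2:ℝ) => ((g ‖x‖ : ℝ) : ℂ)) n
      = ((∫ x in (0:ℝ)..1, g x * Real.cos (n * Real.pi * x) : ℝ) : ℂ) := by
  have hc : Continuous (fun x : AddCircle (2:ℝ) => ((g ‖x‖ : ℝ) : ℂ)) := by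
    refine Complex.continuous_ofReal.comp (hg.comp_continuous continuous_norm fun x => ?_)
    refine ⟨norm_nonneg _, ?_⟩
    have := AddCircle.norm_le_half_period (2:ℝ) (x := x) (by norm_num)
    simpa using this
  set φ : ℝ → ℂ := fun x =>
    fourier (T := 2) (-n) (x : AddCircle (2:ℝ)) • ((g ‖(x : AddCircle (2:ℝ))‖ : ℝ) : ℂ) with hφ
  have hφc : Continuous φ := by
    have h1 : Continuous (fun x : ℝ => (x : AddCircle (2:ℝ))) := AddCircle.continuous_mk' 2
    exact ((fourier (T := 2) (-n)).continuous.comp h1).smul (hc.comp h1)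
  have hi : ∀ a b, IntervalIntegrable φ volume a b := fun a b => hφc.intervalIntegrable a b
  rw [fourierCoeff_eq_intervalIntegral _ n (-1)]
  change (1 / (2:ℝ)) • ∫ x in (-1:ℝ)..(-1 + 2), φ x = _
  have h2 : ∫ x in (-1:ℝ)..0, φ x = ∫ x in (0:ℝ)..1, φ (-x) := by
    rw [intervalIntegral.integral_comp_neg]; simp
  rw [show (-1 + 2 : ℝ) = 1 by norm_num,
    ← intervalIntegral.integral_add_adjacent_intervals (hi (-1) 0) (hi 0 1), h2,
    ← intervalIntegral.integral_add (f := fun x => φ (-x)) ((hφc.comp continuous_neg).intervalIntegrable 0 1) (hi 0 1),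
    ← intervalIntegral.integral_smul, ← intervalIntegral.integral_ofReal]
  refine intervalIntegral.integral_congr fun x hx => ?_
  rw [uIcc_of_le zero_le_one] at hx
  have hn : ‖(x : AddCircle (2:ℝ))‖ = x := by
    rw [(AddCircle.norm_coe_eq_abs_iff (2:ℝ) two_ne_zero).2, abs_of_nonneg hx.1]
    rw [abs_of_nonneg hx.1]; simpa using hx.2
  have hn' : ‖((-x : ℝ) : AddCircle (2:ℝ))‖ = x := by
    rw [AddCircle.coe_neg, norm_neg, hn]
  have e := Complex.two_cos (n * Real.pi * x)
  simp only [hφ, hn, hn', fourier_coe_apply, smul_eq_mul, Complex.real_smul]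
  push_cast
  rw [show 2 * (Real.pi:ℂ) * Complex.I * -n * -x / 2 = (n * Real.pi * x) * Complex.I by ring,
    show 2 * (Real.pi:ℂ) * Complex.I * -n * x / 2 = -(n * Real.pi * x) * Complex.I by ring,
    ← add_mul, ← e]
  ring

/-- Translation multiplies the `n`-th Fourier coefficient by the character at the shift. -/
theorem fourierCoeff_translate (G : AddCircle (2:ℝ) → ℂ) (h : AddCircle (2:ℝ)) (n : ℤ) :
    fourierCoeff (T := 2) (fun x => G (x + h)) n = fourier n h * fourierCoeff (T := 2) G n := by
  unfold fourierCoeff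
  rw [← integral_add_right_eq_self (fun t => fourier (T := 2) (-n) t • G t) h,
    ← integral_const_mul]
  refine integral_congr_ae (Filter.Eventually.of_forall fun t => ?_)
  have h1 : fourier (T := 2) n h * fourier (T := 2) (-n) h = 1 := by
    rw [← fourier_add]; simp
  have h2 : fourier (T := 2) (-n) (t + h) = fourier (T := 2) (-n) t * fourier (T := 2) (-n) h := by
    simp [fourier_apply, smul_add, AddCircle.toCircle_add]
  simp only [h2, smul_eq_mul]
  linear_combination (-(fourier (T := 2) (-n) t * G (t + h))) * h1

/-- Bessel's inequality for a bounded continuous function. -/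
theorem sum_sq_fourierCoeff_le (D : C(AddCircle (2:ℝ), ℂ)) (B : ℝ) (hB : ∀ x, ‖D x‖ ≤ B)
    (s : Finset ℤ) : ∑ n ∈ s, ‖fourierCoeff (T := 2) D n‖ ^ 2 ≤ B ^ 2 := by
  have H := hasSum_sq_fourierCoeff (T := 2)
    (ContinuousMap.toLp (E := ℂ) 2 AddCircle.haarAddCircle ℂ D)
  simp only [fourierCoeff_toLp] at H
  refine (sum_le_hasSum s (fun _ _ => by positivity) H).trans ?_
  have hae := ContinuousMap.coeFn_toLp (E := ℂ) (p := 2) (𝕜 := ℂ)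
    (AddCircle.haarAddCircle (T := 2)) D
  rw [integral_congr_ae (g := fun t => ‖D t‖ ^ 2) (hae.mono fun t ht => by simp only [ht])]
  refine (integral_mono_of_nonneg (g := fun _ => B ^ 2)
    (Filter.Eventually.of_forall fun t => by positivity) (integrable_const _)
    (Filter.Eventually.of_forall fun t => ?_)).trans ?_
  · exact pow_le_pow_left₀ (norm_nonneg _) (hB t) 2
  · simp

theorem two_le_norm_exp_sub_one_sq (θ : ℝ) (h1 : Real.pi / 2 ≤ θ) (h2 : θ ≤ Real.pi) :
    2 ≤ ‖Complex.exp (θ * Complex.I) - 1‖ ^ 2 := by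
  have hc : Real.cos θ ≤ 0 :=
    Real.cos_nonpos_of_pi_div_two_le_of_le h1 (by linarith [Real.pi_pos])
  rw [← Complex.normSq_eq_norm_sq, Complex.exp_mul_I, ← Complex.ofReal_cos,
    ← Complex.ofReal_sin, Complex.normSq_apply]
  simp only [Complex.sub_re, Complex.sub_im, Complex.add_re, Complex.add_im, Complex.mul_re,
    Complex.mul_im, Complex.ofReal_re, Complex.ofReal_im, Complex.I_re, Complex.I_im,
    Complex.one_re, Complex.one_im]
  nlinarith [Real.sin_sq_add_cos_sq θ]

/-! ### Bernstein's estimate -/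

/-- Bernstein's estimate: the cosine coefficients of a `δ`-Hölder function satisfy a square-sum
bound `≲ 2^{-2δm}` on the dyadic block of frequencies in `[2^m, 2^(m+1))`. -/
theorem sum_dyadic_block_le (g : ℝ → ℝ) (hg : ContinuousOn g (Icc 0 1)) (δ L : ℝ) (hδ : 0 < δ)
    (hL : 0 ≤ L)
    (hh : ∀ x ∈ Icc (0:ℝ) 1, ∀ y ∈ Icc (0:ℝ) 1, |g x - g y| ≤ L * |x - y| ^ δ) (m : ℕ) :
    ∑ n ∈ Finset.Ico (2 ^ m) (2 ^ (m + 1)),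
      (∫ x in (0:ℝ)..1, g x * Real.cos ((n : ℕ) * Real.pi * x)) ^ 2
      ≤ L ^ 2 / 2 * ((2 : ℝ) ^ (-(2 * δ))) ^ (m + 1) := by
  have hmem : ∀ x : AddCircle (2:ℝ), ‖x‖ ∈ Icc (0:ℝ) 1 := fun x =>
    ⟨norm_nonneg _, by
      simpa using AddCircle.norm_le_half_period (2:ℝ) (x := x) (by norm_num)⟩
  set h : ℝ := (2 ^ (m + 1))⁻¹ with hhdef
  have h0 : 0 < h := by positivity
  let G : C(AddCircle (2:ℝ), ℂ) := ⟨fun x => ((g ‖x‖ : ℝ) : ℂ),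
    Complex.continuous_ofReal.comp (hg.comp_continuous continuous_norm hmem)⟩
  let Gh : C(AddCircle (2:ℝ), ℂ) := G.comp ⟨fun x => x + (h : AddCircle (2:ℝ)), by fun_prop⟩
  have hB : ∀ x, ‖(Gh - G) x‖ ≤ L * h ^ δ := fun x => by
    change ‖((g ‖x + (h : AddCircle (2:ℝ))‖ : ℝ) : ℂ) - ((g ‖x‖ : ℝ) : ℂ)‖ ≤ _
    rw [← Complex.ofReal_sub, Complex.norm_real, Real.norm_eq_abs]
    refine (hh _ (hmem _) _ (hmem _)).trans ?_
    gcongr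
    refine (abs_norm_sub_norm_le _ _).trans ?_
    rw [add_sub_cancel_left]
    rw [(AddCircle.norm_coe_eq_abs_iff (2:ℝ) (x := h) two_ne_zero).2, abs_of_pos h0]
    rw [abs_of_pos h0, hhdef]
    have : (2 ^ (m + 1) : ℝ)⁻¹ ≤ 1 := inv_le_one_of_one_le₀ (one_le_pow₀ (by norm_num))
    simpa using this
  have key : ∀ n : ℕ, fourierCoeff (T := 2) (Gh - G : C(AddCircle (2:ℝ), ℂ)) (n : ℤ)
      = (Complex.exp ((n * Real.pi * h : ℝ) * Complex.I) - 1)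
        * ((∫ x in (0:ℝ)..1, g x * Real.cos ((n : ℕ) * Real.pi * x) : ℝ) : ℂ) := fun n => by
    have e1 : fourierCoeff (T := 2) (Gh - G : C(AddCircle (2:ℝ), ℂ)) (n : ℤ)
        = fourierCoeff (T := 2) Gh n - fourierCoeff (T := 2) G n := by
      unfold fourierCoeff
      rw [← integral_sub]
      · simp [mul_sub]
      · exact ((fourier (T := 2) (-n)).continuous.smul Gh.continuous).integrable_of_hasCompactSupport
          (HasCompactSupport.of_compactSpace _)
      · exact ((fourier (T := 2) (-n)).continuous.smul G.continuous).integrable_of_hasCompactSupport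
          (HasCompactSupport.of_compactSpace _)
    have e2 := fourierCoeff_translate G (h : AddCircle (2:ℝ)) n
    have e3 := fourierCoeff_even_ext g hg n
    have e4 : fourierCoeff (T := 2) Gh (n : ℤ) = fourierCoeff (T := 2)
      (fun x => G (x + (h : AddCircle (2:ℝ)))) n := rfl
    rw [e1, e4, e2, show fourierCoeff (T := 2) (G : AddCircle (2:ℝ) → ℂ) (n : ℤ) = _ from e3,
      fourier_coe_apply]
    push_cast
    rw [show 2 * (Real.pi:ℂ) * Complex.I * n * h / 2 = n * Real.pi * h * Complex.I by ring]
    ring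
  have S := sum_sq_fourierCoeff_le (Gh - G) _ hB
    ((Finset.Ico (2 ^ m) (2 ^ (m + 1))).map Nat.castEmbedding)
  rw [Finset.sum_map] at S
  have hle : ∑ n ∈ Finset.Ico (2 ^ m) (2 ^ (m + 1)),
      2 * (∫ x in (0:ℝ)..1, g x * Real.cos ((n : ℕ) * Real.pi * x)) ^ 2 ≤ (L * h ^ δ) ^ 2 := by
    refine (Finset.sum_le_sum fun n hn => ?_).trans S
    rw [Finset.mem_Ico] at hn
    have a1 : (2:ℝ) ^ m ≤ n := by exact_mod_cast hn.1
    have a2 : (n:ℝ) ≤ 2 ^ (m + 1) := by exact_mod_cast hn.2.le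
    have b1 : 1 / 2 ≤ n * h := by
      rw [hhdef, ← div_eq_mul_inv, le_div_iff₀ (by positivity), pow_succ]; linarith
    have b2 : n * h ≤ 1 := by
      rw [hhdef, ← div_eq_mul_inv]; exact div_le_one_of_le₀ a2 (by positivity)
    have t := two_le_norm_exp_sub_one_sq (n * Real.pi * h)
      (by nlinarith [Real.pi_pos]) (by nlinarith [Real.pi_pos])
    rw [Nat.castEmbedding_apply, key n, norm_mul, mul_pow, Complex.norm_real, Real.norm_eq_abs,
      sq_abs]
    gcongr
  have hp : (h ^ δ) ^ 2 = ((2 : ℝ) ^ (-(2 * δ))) ^ (m + 1) := by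
    rw [hhdef, ← Real.rpow_natCast 2 (m + 1), ← Real.rpow_neg (by norm_num),
      ← Real.rpow_mul (by norm_num), ← Real.rpow_natCast, ← Real.rpow_natCast,
      ← Real.rpow_mul (by norm_num), ← Real.rpow_mul (by norm_num)]
    congr 1; push_cast; ring
  rw [← Finset.mul_sum, mul_pow, hp] at hle
  linarith

/-- The weight `(kπ)^(2-α)` is at most `(2^(m+1) π)^(2-α)` on the `m`-th block, so the dyadic
blocks contribute a geometric series of ratio `2^(2-α-2δ) < 1`. -/
theorem dxHNorm_le_of_holder (α δ L : ℝ) (hα : α ≤ 2) (hδ0 : 0 < δ) (hδ : 1 - α / 2 < δ)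
    (hL : 0 ≤ L) (g : ℝ → ℝ) (hg : ContinuousOn g (Icc 0 1))
    (hh : ∀ x ∈ Icc (0:ℝ) 1, ∀ y ∈ Icc (0:ℝ) 1, |g x - g y| ≤ L * |x - y| ^ δ) :
    dxHNorm α g ≤ Real.sqrt
      (Real.pi ^ (2 - α) * L ^ 2 * (1 - (2:ℝ) ^ (2 - α - 2 * δ))⁻¹) := by
  set q : ℝ := (2:ℝ) ^ (2 - α - 2 * δ) with hq
  have hq0 : 0 < q := by positivity
  have hq1 : q < 1 := Real.rpow_lt_one_of_one_lt_of_neg (by norm_num) (by linarith)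
  set a : ℕ → ℝ := fun n => ((n : ℝ) * Real.pi) ^ (2 - α)
    * (2 * (∫ x in (0:ℝ)..1, g x * Real.cos ((n : ℕ) * Real.pi * x)) ^ 2) with ha
  have ha0 : ∀ n, 0 ≤ a n := fun n => by simp only [ha]; positivity
  have hterm : ∀ k : ℕ, (((k : ℝ) + 1) * Real.pi) ^ (2 - α) * cco g k ^ 2 = a (k + 1) := fun k => by
    have : cco g k = Real.sqrt 2 *
        ∫ x in (0:ℝ)..1, g x * Real.cos (((k + 1 : ℕ) : ℝ) * Real.pi * x) := by
      rw [cco, ← intervalIntegral.integral_const_mul]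
      congr 1; ext x; push_cast; ring
    rw [this, mul_pow, Real.sq_sqrt (by norm_num)]
    simp [ha]
  have hblock : ∀ m, ∑ n ∈ Finset.Ico (2 ^ m) (2 ^ (m + 1)), a n
      ≤ Real.pi ^ (2 - α) * L ^ 2 * q ^ (m + 1) := fun m => by
    have hb := sum_dyadic_block_le g hg δ L hδ0 hL hh m
    have hstep : ∑ n ∈ Finset.Ico (2 ^ m) (2 ^ (m + 1)), a n ≤
        (2 ^ (m + 1) * Real.pi) ^ (2 - α) * 2 * ∑ n ∈ Finset.Ico (2 ^ m) (2 ^ (m + 1)),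
          (∫ x in (0:ℝ)..1, g x * Real.cos ((n : ℕ) * Real.pi * x)) ^ 2 := by
      rw [Finset.mul_sum]
      refine Finset.sum_le_sum fun n hn => ?_
      have a2 : (n:ℝ) ≤ 2 ^ (m + 1) := by exact_mod_cast (Finset.mem_Ico.1 hn).2.le
      have w : ((n : ℝ) * Real.pi) ^ (2 - α) ≤ (2 ^ (m + 1) * Real.pi) ^ (2 - α) :=
        Real.rpow_le_rpow (by positivity) (by gcongr) (by linarith)
      simp only [ha]
      rw [← mul_assoc]
      gcongr
    refine hstep.trans ((mul_le_mul_of_nonneg_left hb (by positivity)).trans (le_of_eq ?_))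
    have e : ((2:ℝ) ^ (m + 1)) ^ (2 - α) * ((2 : ℝ) ^ (-(2 * δ))) ^ (m + 1) = q ^ (m + 1) := by
      rw [hq, ← Real.rpow_natCast, ← Real.rpow_natCast, ← Real.rpow_natCast,
        ← Real.rpow_mul (by norm_num), ← Real.rpow_mul (by norm_num),
        ← Real.rpow_mul (by norm_num), ← Real.rpow_add (by norm_num)]
      congr 1; ring
    rw [Real.mul_rpow (by positivity) Real.pi_pos.le, ← e]
    ring
  have hsum : ∀ M, ∑ n ∈ Finset.Ico 1 (2 ^ M), a n
      ≤ Real.pi ^ (2 - α) * L ^ 2 * ∑ i ∈ Finset.range M, q ^ (i + 1) := fun M => by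
    induction M with
    | zero => simp
    | succ M ih =>
      rw [← Finset.sum_Ico_consecutive a (Nat.one_le_two_pow (n := M))
        (Nat.pow_le_pow_right (by norm_num) (Nat.le_succ M)), Finset.sum_range_succ, mul_add]
      exact add_le_add ih (hblock M)
  have hgeo : ∀ M, ∑ i ∈ Finset.range M, q ^ (i + 1) ≤ (1 - q)⁻¹ := fun M => by
    refine (Finset.sum_le_sum fun i _ => pow_le_pow_of_le_one hq0.le hq1.le (Nat.le_succ i)).trans ?_
    rw [← tsum_geometric_of_lt_one hq0.le hq1]
    exact (summable_geometric_of_lt_one hq0.le hq1).sum_le_tsum _ fun i _ => by positivity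
  refine Real.sqrt_le_sqrt (Real.tsum_le_of_sum_range_le (fun k => by positivity) fun N => ?_)
  simp only [hterm]
  have hsub : ∑ k ∈ Finset.range N, a (k + 1) ≤ ∑ n ∈ Finset.Ico 1 (2 ^ (N + 1)), a n := by
    rw [Finset.range_eq_Ico, Finset.sum_Ico_add' a 0 N 1]
    refine Finset.sum_le_sum_of_subset_of_nonneg
      (Finset.Ico_subset_Ico (by simp) ?_) fun n _ _ => ha0 n
    have := (N + 1).lt_two_pow_self
    omega
  exact hsub.trans ((hsum _).trans (mul_le_mul_of_nonneg_left (hgeo _) (by positivity)))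

/-! ### Composition with a polynomial -/

/-- The suprema in `cNorm` are genuine, the first by compactness and the second by the boundedness
contained in `memC`, so they bound the values and the increments of `u`. -/
theorem holder_of_memC {δ : ℝ} {u : ℝ → ℝ} (hδ : 0 < δ) (hu : memC δ u) :
    0 ≤ cNorm δ u ∧ (∀ x ∈ Icc (0:ℝ) 1, |u x| ≤ cNorm δ u) ∧
    ∀ x ∈ Icc (0:ℝ) 1, ∀ y ∈ Icc (0:ℝ) 1, |u x - u y| ≤ cNorm δ u * |x - y| ^ δ := by
  obtain ⟨hc, hb⟩ := hu
  have hs0 : 0 ≤ supIcc u := Real.iSup_nonneg fun x => abs_nonneg _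
  have hh0 : 0 ≤ holderSemi δ u := Real.iSup_nonneg fun p => by positivity
  have hn : cNorm δ u = supIcc u + holderSemi δ u := by rw [cNorm, if_neg hδ.ne']
  refine ⟨by rw [hn]; positivity, fun x hx => ?_, fun x hx y hy => ?_⟩
  · have hbd : BddAbove (Set.range fun x : Icc (0:ℝ) 1 => |u (x : ℝ)|) := by
      obtain ⟨B, hB⟩ := isCompact_Icc.exists_bound_of_continuousOn hc
      exact ⟨B, by rintro _ ⟨x, rfl⟩; exact hB x x.2⟩
    have := le_ciSup hbd ⟨x, hx⟩
    rw [hn]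
    change |u x| ≤ supIcc u at this
    linarith
  · rcases eq_or_ne x y with rfl | hxy
    · simp [Real.zero_rpow hδ.ne']
    have h1 : |u x - u y| / |x - y| ^ δ ≤ holderSemi δ u := le_ciSup hb (⟨x, hx⟩, ⟨y, hy⟩)
    have h2 : 0 < |x - y| ^ δ := Real.rpow_pos_of_pos (abs_pos.2 (sub_ne_zero.2 hxy)) _
    rw [div_le_iff₀ h2] at h1
    rw [hn]
    nlinarith

/-- A polynomial is Lipschitz on `[-R, R]`. -/
theorem polynomial_lipschitz (f : Polynomial ℝ) (R : ℝ) :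
    ∃ K, 0 ≤ K ∧ ∀ a b, |a| ≤ R → |b| ≤ R → |f.eval a - f.eval b| ≤ K * |a - b| := by
  obtain ⟨B, hB⟩ := (isCompact_Icc (a := -R) (b := R)).exists_bound_of_continuousOn
    f.derivative.continuous.continuousOn
  refine ⟨max B 0, le_max_right _ _, fun a b ha hb => ?_⟩
  refine Convex.norm_image_sub_le_of_norm_deriv_le (𝕜 := ℝ) (f := fun x => f.eval x)
    (s := Icc (-R) R) (fun x _ => f.differentiableAt) (fun x hx => ?_) (convex_Icc _ _)
    (abs_le.1 hb) (abs_le.1 ha)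
  rw [Polynomial.deriv]
  exact (hB x hx).trans (le_max_left _ _)

/-- local linear growth of `F(u) = ∂ₓ f(u)` in `H^{-α/2}₂`. -/
theorem stmt9 (α δ : ℝ) (hα : α ∈ Set.Ioc (1:ℝ) 2) (hδ : δ ∈ Set.Ioo (1 - α/2) 1)
    (f : Polynomial ℝ) :
    ∀ R > 0, ∃ C > 0, ∀ u : ℝ → ℝ, memC δ u → cNorm δ u ≤ R →
      dxHNorm α (fun x => f.eval (u x)) ≤ C * (1 + cNorm δ u) := by
  intro R hR
  have hδ0 : 0 < δ := by linarith [hα.2, hδ.1]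
  obtain ⟨K, hK0, hK⟩ := polynomial_lipschitz f R
  -- the summand `1` only serves to make the constant positive
  refine ⟨Real.sqrt (Real.pi ^ (2 - α) * (K * R) ^ 2 * (1 - (2:ℝ) ^ (2 - α - 2 * δ))⁻¹) + 1,
    by positivity, fun u hu huR => ?_⟩
  obtain ⟨hn0, hsup, hhol⟩ := holder_of_memC hδ0 hu
  have hF := dxHNorm_le_of_holder α δ (K * R) hα.2 hδ0 hδ.1 (by positivity)
    (fun x => f.eval (u x)) (f.continuous.comp_continuousOn hu.1) fun x hx y hy => by
      refine (hK _ _ ((hsup x hx).trans huR) ((hsup y hy).trans huR)).trans ?_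
      rw [mul_assoc]
      refine mul_le_mul_of_nonneg_left ((hhol x hx y hy).trans ?_) hK0
      gcongr
  refine hF.trans ?_
  nlinarith [Real.sqrt_nonneg
    (Real.pi ^ (2 - α) * (K * R) ^ 2 * (1 - (2:ℝ) ^ (2 - α - 2 * δ))⁻¹)]
end
end
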